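/- Every graph G with maximum degree at most 4 has a vertex partition {V₁, V₂} such that both induced subgraphs G[V₁] and G[V₂] have maximum degree at most 2. -/

import Mathlib

/-- Splitting a symmetric double sum at a vertex. -/
theorem sum_split_aux {V : Type*} [Fintype V] [DecidableEq V] (a : V → V → ℕ) (v : V)
    (hs : ∀ u w, a u w = a w u) (h0 : a v v = 0) :
    ∑ u, ∑ w, a u w = 2 * ∑ w, a v w +
      ∑ u ∈ Finset.univ.erase v, ∑ w ∈ Finset.univ.erase v, a u w := by
  have h1 : ∀ u, ∑ w, a u w = a u v + ∑ w ∈ Finset.univ.erase v, a u w := fun u =>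
    (Finset.add_sum_erase _ _ (Finset.mem_univ v)).symm
  have h2 : ∑ u ∈ Finset.univ.erase v, a u v = ∑ w ∈ Finset.univ.erase v, a v w :=
    Finset.sum_congr rfl fun u _ => hs u v
  rw [← Finset.add_sum_erase _ _ (Finset.mem_univ v)]
  rw [Finset.sum_congr rfl (fun u _ => h1 u), Finset.sum_add_distrib, h2, h1 v, h0]
  ring

/-- Every graph with maximum degree at most 4 has a vertex partition `{V₁, V₂}` such that
both induced subgraphs `G[V₁]`, `G[V₂]` have maximum degree at most 2. -/
theorem stmt6 {V : Type*} [Fintype V] [DecidableEq V]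
    (G : SimpleGraph V) [DecidableRel G.Adj]
    (h : ∀ v, G.degree v ≤ 4) :
    ∃ V₁ V₂ : Finset V, Disjoint V₁ V₂ ∧ V₁ ∪ V₂ = Finset.univ ∧
      (∀ v ∈ V₁, (G.neighborFinset v ∩ V₁).card ≤ 2) ∧
      (∀ v ∈ V₂, (G.neighborFinset v ∩ V₂).card ≤ 2) := by
  let a : (V → Bool) → V → V → ℕ := fun f u w => if G.Adj u w ∧ f u = f w then 1 else 0
  obtain ⟨f, hf⟩ := Finite.exists_min (fun f : V → Bool => ∑ u, ∑ w, a f u w)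
  have hs : ∀ f u w, a f u w = a f w u := by
    intro f u w
    simp only [a, G.adj_comm u w, eq_comm (a := f u)]
  have h0 : ∀ f v, a f v v = 0 := by
    intro f v
    simp [a]
  have key : ∀ v, ∑ w, a f v w ≤ 2 := by
    intro v
    have hm := hf (Function.update f v (!f v))
    rw [sum_split_aux _ v (hs _) (h0 _ v), sum_split_aux _ v (hs _) (h0 _ v)] at hm
    have hr : ∑ u ∈ Finset.univ.erase v, ∑ w ∈ Finset.univ.erase v,
        a (Function.update f v (!f v)) u w =
        ∑ u ∈ Finset.univ.erase v, ∑ w ∈ Finset.univ.erase v, a f u w := by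
      refine Finset.sum_congr rfl fun u hu => Finset.sum_congr rfl fun w hw => ?_
      simp only [a, Function.update_of_ne (Finset.ne_of_mem_erase hu),
        Function.update_of_ne (Finset.ne_of_mem_erase hw)]
    have hd : ∑ w, a f v w + ∑ w, a (Function.update f v (!f v)) v w = G.degree v := by
      rw [← Finset.sum_add_distrib, ← G.card_neighborFinset_eq_degree,
        G.neighborFinset_eq_filter, Finset.card_filter]
      refine Finset.sum_congr rfl fun w _ => ?_
      by_cases hw : G.Adj v w
      · have hne : w ≠ v := hw.ne'
        simp only [a, Function.update_self, Function.update_of_ne hne, hw, true_and, if_true]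
        cases f v <;> cases f w <;> simp
      · simp [a, hw]
    have := h v
    omega
  have conv : ∀ (b : Bool) v, f v = b →
      (G.neighborFinset v ∩ Finset.univ.filter (fun w => f w = b)).card ≤ 2 := by
    intro b v hv
    refine le_trans (le_of_eq ?_) (key v)
    simp only [a]
    rw [← Finset.card_filter]
    congr 1
    ext w
    simp [hv, eq_comm]
  refine ⟨Finset.univ.filter (fun w => f w = true), Finset.univ.filter (fun w => f w = false),
    ?_, ?_, ?_, ?_⟩
  · rw [Finset.disjoint_left]
    intro w
    simp
  · ext w
    cases hw : f w <;> simp [hw]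
  · intro v hv
    exact conv true v (by simpa using hv)
  · intro v hv
    exact conv false v (by simpa using hv)
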